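/- arXiv:2501.11466 — 3 statements merged into one kernel-verified Lean document; each statement's English description precedes it below -/
import Mathlib

section
/- Let n ≥ 4 and 2 ≤ k ≤ n−2 be integers, and let ρ be a permutation of ℤ/nℤ. If ρ preserves weak separation, i.e. for all k-element subsets I, J of ℤ/nℤ, I ∥ J implies ρ(I) ∥ ρ(J), then ρ belongs to the dihedral group D_n. -/
open Finset

/-- `(a,b,c,d)` is strictly cyclically ordered in `ℤ/nℤ`. -/
def StrictCyclicOrd {n : ℕ} (a b c d : ZMod n) : Prop :=
  0 < (b - a).val ∧ (b - a).val < (c - a).val ∧ (c - a).val < (d - a).val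

/-- `I` and `J` are weakly separated subsets of `ℤ/nℤ`. -/
def WeaklySep {n : ℕ} (I J : Finset (ZMod n)) : Prop :=
  ¬ ∃ a c b d : ZMod n, a ∈ I \ J ∧ c ∈ I \ J ∧ b ∈ J \ I ∧ d ∈ J \ I ∧
      StrictCyclicOrd a b c d

/-- The dihedral group `D_n`, realized as the subgroup of permutations of `ℤ/nℤ`
generated by `σ : i ↦ i + 1` and `τ : i ↦ 2 - i`. -/
def dihedral (n : ℕ) : Subgroup (Equiv.Perm (ZMod n)) :=
  Subgroup.closure {Equiv.addRight (1 : ZMod n), Equiv.subLeft (2 : ZMod n)}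

/-- The set `[m] = {1, …, m} ⊆ ℤ/nℤ` (with `[0] = ∅`). -/
def seg (n m : ℕ) : Finset (ZMod n) := (Finset.Icc 1 m).image (fun t : ℕ => (t : ZMod n))

/-- Rectangle label `I^rec_{i,j} = ([i+j]∖[i]) ∪ ([n]∖[n−k+j])`. -/
def Irec (k n i j : ℕ) : Finset (ZMod n) :=
  (seg n (i + j) \ seg n i) ∪ (seg n n \ seg n (n - k + j))

/-- Checkboard label `I^ch_{i,j} = σ^{−⌈(i+j)/2⌉} I^rec_{i,j}`. -/
def Ich (k n i j : ℕ) : Finset (ZMod n) :=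
  (Irec k n i j).image (fun x => x - (((i + j + 1) / 2 : ℕ) : ZMod n))

/-- Dual rectangle label `Î^rec_{i,j} = [i] ∪ ([k+j]∖[i+j])`. -/
def Drec (k n i j : ℕ) : Finset (ZMod n) :=
  seg n i ∪ (seg n (k + j) \ seg n (i + j))

/-- Dual checkboard label `Î^ch_{i,j} = σ^{−⌈(i+j)/2⌉} Î^rec_{i,j}`. -/
def Dch (k n i j : ℕ) : Finset (ZMod n) :=
  (Drec k n i j).image (fun x => x - (((i + j + 1) / 2 : ℕ) : ZMod n))

/-- The rectangle collection `C^rec_{k,n}`. -/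
def Crec (k n : ℕ) : Finset (Finset (ZMod n)) :=
  ((Finset.range (n - k + 1)) ×ˢ (Finset.range (k + 1))).image (fun p => Irec k n p.1 p.2)

/-- The checkboard collection `C^ch_{k,n}`. -/
def Cch (k n : ℕ) : Finset (Finset (ZMod n)) :=
  ((Finset.range (n - k + 1)) ×ˢ (Finset.range (k + 1))).image (fun p => Ich k n p.1 p.2)

/-- The dual rectangle collection `Ĉ^rec_{k,n}`. -/
def CDrec (k n : ℕ) : Finset (Finset (ZMod n)) :=
  ((Finset.range (k + 1)) ×ˢ (Finset.range (n - k + 1))).image (fun p => Drec k n p.1 p.2)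

/-- The dual checkboard collection `Ĉ^ch_{k,n}`. -/
def CDch (k n : ℕ) : Finset (Finset (ZMod n)) :=
  ((Finset.range (k + 1)) ×ˢ (Finset.range (n - k + 1))).image (fun p => Dch k n p.1 p.2)

/-- `C` is a weakly separated collection of `k`-subsets of `ℤ/nℤ`. -/
def IsWSColl (n k : ℕ) (C : Set (Finset (ZMod n))) : Prop :=
  (∀ I ∈ C, I.card = k) ∧ ∀ I ∈ C, ∀ J ∈ C, WeaklySep I J

/-- `C` is a maximal weakly separated collection of `k`-subsets of `ℤ/nℤ`. -/
def IsMaxWSColl (n k : ℕ) (C : Set (Finset (ZMod n))) : Prop :=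
  IsWSColl n k C ∧ ∀ C' : Set (Finset (ZMod n)), IsWSColl n k C' → C ⊆ C' → C' = C

/-!
Weak separation of `I` and `J` only depends on `I \ J` and `J \ I`, so two `m`-subsets can be padded
by a common set without affecting it; hence a permutation preserving weak separation of `k`-subsets
also preserves it for pairs. A pair is weakly separated from all other pairs exactly when it is an
edge `{i, i + 1}` of the `n`-gon: any other pair `{p, q}` is crossed by `{p + 1, p - 1}`. So the
permutation maps edges to edges, and by injectivity it cannot turn back: it is `x ↦ c + x` or
`x ↦ c - x`.
-/

section Dihedral

variable {n : ℕ}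

theorem addRight_mem_dihedral (a : ZMod n) : Equiv.addRight a ∈ dihedral n := by
  obtain ⟨m, rfl⟩ := ZMod.intCast_surjective a
  have addRight_one_mem : Equiv.addRight (1 : ZMod n) ∈ dihedral n :=
    Subgroup.subset_closure (by simp)
  simpa using zpow_mem addRight_one_mem m

theorem subLeft_mem_dihedral (a : ZMod n) : Equiv.subLeft a ∈ dihedral n := by
  have subLeft_two_mem : Equiv.subLeft (2 : ZMod n) ∈ dihedral n :=
    Subgroup.subset_closure (by simp)
  have factorization : Equiv.subLeft a = Equiv.addRight (a - 2) * Equiv.subLeft 2 := by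
    ext x
    simp
  exact factorization ▸ mul_mem (addRight_mem_dihedral _) subLeft_two_mem

theorem apply_eq_add_mul_of_map_add_one {f : ZMod n → ZMod n} {d : ZMod n}
    (hf : ∀ x, f (x + 1) = f x + d) (x : ZMod n) : f x = f 0 + x * d := by
  obtain ⟨m, rfl⟩ := ZMod.intCast_surjective x
  simpa using AddConstMapClass.map_zsmul_const (⟨f, hf⟩ : AddConstMap (ZMod n) (ZMod n) 1 d) m

theorem periodic_apply_add_one_sub_of_injective {f : ZMod n → ZMod n} (hf : f.Injective)
    (hstep : ∀ x, f (x + 1) = f x + 1 ∨ f (x + 1) = f x - 1) :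
    Function.Periodic (fun x ↦ f (x + 1) - f x) 1 := by
  intro x
  -- Opposite consecutive steps give `f (x + 2) = f x`, hence `2 = 0` and the steps agree anyway.
  have neg_one_eq_one_of_turn (h : f (x + 1 + 1) = f x) : (-1 : ZMod n) = 1 := by
    linear_combination -hf h
  rcases hstep x with h | h <;> rcases hstep (x + 1) with h' | h' <;> simp only [h', h]
  · ring
  · linear_combination neg_one_eq_one_of_turn (by rw [h', h]; ring)
  · linear_combination -neg_one_eq_one_of_turn (by rw [h', h]; ring)
  · ring

theorem eq_add_or_eq_sub_of_injective {f : ZMod n → ZMod n} (hf : f.Injective)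
    (hstep : ∀ x, f (x + 1) = f x + 1 ∨ f (x + 1) = f x - 1) :
    (∀ x, f x = f 0 + x) ∨ ∀ x, f x = f 0 - x := by
  have constant_step (x : ZMod n) : f (x + 1) = f x + (f (0 + 1) - f 0) := by
    obtain ⟨m, rfl⟩ := ZMod.intCast_surjective x
    have := (periodic_apply_add_one_sub_of_injective hf hstep).int_mul_eq m
    rw [mul_one] at this
    linear_combination this
  have affine := apply_eq_add_mul_of_map_add_one constant_step
  refine (hstep 0).imp (fun h x ↦ ?_) (fun h x ↦ ?_) <;> rw [affine x, h] <;> ring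

theorem mem_dihedral_of_map_add_one {ρ : Equiv.Perm (ZMod n)}
    (hstep : ∀ x, ρ (x + 1) = ρ x + 1 ∨ ρ (x + 1) = ρ x - 1) : ρ ∈ dihedral n := by
  rcases eq_add_or_eq_sub_of_injective ρ.injective hstep with translation | reflection
  · have : ρ = Equiv.addRight (ρ 0) := Equiv.ext fun x ↦ (translation x).trans (add_comm _ _)
    exact this ▸ addRight_mem_dihedral _
  · have : ρ = Equiv.subLeft (ρ 0) := Equiv.ext reflection
    exact this ▸ subLeft_mem_dihedral _

end Dihedral

section WeakSeparation

variable {n : ℕ}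

theorem weaklySep_congr {I J I' J' : Finset (ZMod n)} (hIJ : I \ J = I' \ J')
    (hJI : J \ I = J' \ I') : WeaklySep I J ↔ WeaklySep I' J' := by
  simp only [WeaklySep, hIJ, hJI]

theorem weaklySep_union_right_iff {I J K : Finset (ZMod n)} (hI : Disjoint I K)
    (hJ : Disjoint J K) : WeaklySep (I ∪ K) (J ∪ K) ↔ WeaklySep I J :=
  weaklySep_congr (by grind [Finset.disjoint_left]) (by grind [Finset.disjoint_left])

theorem val_neg_one_of_neZero (n : ℕ) [NeZero n] : (-1 : ZMod n).val = n - 1 := by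
  obtain ⟨m, rfl⟩ := Nat.exists_eq_succ_of_ne_zero (NeZero.ne n)
  exact ZMod.val_neg_one m

theorem weaklySep_pair_add_one [NeZero n] (i : ZMod n) (J : Finset (ZMod n)) :
    WeaklySep {i, i + 1} J := by
  rintro ⟨a, c, b, d, ha, hc, -, -, hab, hbc, hcd⟩
  have val_one_le : (1 : ZMod n).val ≤ 1 := ZMod.val_one_eq_one_mod n ▸ Nat.mod_le 1 n
  have val_neg_one := val_neg_one_of_neZero n
  have val_lt := ZMod.val_lt (d - a)
  simp only [mem_sdiff, mem_insert, mem_singleton] at ha hc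
  rcases ha.1 with rfl | rfl <;> rcases hc.1 with rfl | rfl
  · simp at hbc
  · rw [add_sub_cancel_left] at hbc
    omega
  · rw [sub_add_cancel_left] at hcd
    omega
  · simp at hbc

theorem strictCyclicOrd_add_one_sub_one (hn : 1 < n) {p q : ZMod n} (hqp : q ≠ p)
    (hq_succ : q ≠ p + 1) (hq_pred : q ≠ p - 1) : StrictCyclicOrd p (p + 1) q (p - 1) := by
  have : Fact (1 < n) := ⟨hn⟩
  have : NeZero n := ⟨by omega⟩
  have val_one := ZMod.val_one n
  have val_neg_one := val_neg_one_of_neZero n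
  have val_lt := ZMod.val_lt (q - p)
  have val_ne_zero : (q - p).val ≠ 0 := by rwa [Ne, ZMod.val_eq_zero, sub_eq_zero]
  have val_ne_val_one : (q - p).val ≠ (1 : ZMod n).val := fun h ↦
    hq_succ (eq_add_of_sub_eq' (ZMod.val_injective n h))
  have val_ne_val_neg_one : (q - p).val ≠ (-1 : ZMod n).val := fun h ↦
    hq_pred ((eq_add_of_sub_eq' (ZMod.val_injective n h)).trans (sub_eq_add_neg p 1).symm)
  rw [StrictCyclicOrd, add_sub_cancel_left, sub_sub_cancel_left]
  omega

theorem eq_add_one_or_eq_sub_one_of_weaklySep (hn : 1 < n) {p q : ZMod n} (hqp : q ≠ p)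
    (h : WeaklySep {p, q} {p + 1, p - 1}) : q = p + 1 ∨ q = p - 1 := by
  have : Fact (1 < n) := ⟨hn⟩
  by_contra! ⟨hq_succ, hq_pred⟩
  refine h ⟨p, q, p + 1, p - 1, ?_, ?_, ?_, ?_,
    strictCyclicOrd_add_one_sub_one hn hqp hq_succ hq_pred⟩ <;>
  simp [hqp, hq_succ, hq_pred, hq_succ.symm, hq_pred.symm, eq_sub_iff_add_eq]

end WeakSeparation

/-- `f` preserves weak separation of `k`-element subsets of `ℤ/nℤ`. Its role is to make
the cardinality a parameter, so that the case of general `k` can be reduced to `k = 2`; `f` may be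
an arbitrary map, not just a permutation. -/
def PreservesWeaklySep {n : ℕ} (k : ℕ) (f : ZMod n → ZMod n) : Prop :=
  ∀ I J : Finset (ZMod n), I.card = k → J.card = k →
    WeaklySep I J → WeaklySep (I.image f) (J.image f)

namespace PreservesWeaklySep

variable {n k m : ℕ}

theorem of_le [NeZero n] {f : ZMod n → ZMod n} (hf : f.Injective) (h : PreservesWeaklySep k f)
    (hmk : m ≤ k) (hkm : k + m ≤ n) : PreservesWeaklySep m f := by
  intro I J hI hJ hIJ
  obtain ⟨K, hK, hKcard⟩ : ∃ K ⊆ (I ∪ J)ᶜ, K.card = k - m := by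
    apply exists_subset_card_eq
    have := card_union_le I J
    rw [card_compl, ZMod.card]
    omega
  obtain ⟨hIK, hJK⟩ : Disjoint I K ∧ Disjoint J K :=
    disjoint_union_left.mp (disjoint_compl_right.mono_right hK)
  have padded := h (I ∪ K) (J ∪ K) (by rw [card_union_of_disjoint hIK]; omega)
    (by rw [card_union_of_disjoint hJK]; omega) ((weaklySep_union_right_iff hIK hJK).mpr hIJ)
  rw [image_union, image_union] at padded
  exact (weaklySep_union_right_iff ((disjoint_image hf).mpr hIK)
    ((disjoint_image hf).mpr hJK)).mp padded

theorem map_add_one {ρ : Equiv.Perm (ZMod n)} (h : PreservesWeaklySep 2 ρ) (hn : 2 < n)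
    (i : ZMod n) : ρ (i + 1) = ρ i + 1 ∨ ρ (i + 1) = ρ i - 1 := by
  have : NeZero n := ⟨by omega⟩
  have : Fact (1 < n) := ⟨by omega⟩
  have : Fact (2 < n) := ⟨hn⟩
  have neighbours_ne : ρ i + 1 ≠ ρ i - 1 := fun heq ↦
    ZMod.neg_one_ne_one (n := n) (by linear_combination -heq)
  have noncrossing := h {i, i + 1} {ρ.symm (ρ i + 1), ρ.symm (ρ i - 1)}
    (card_pair (by simp)) (card_pair (ρ.symm.injective.ne neighbours_ne))
    (weaklySep_pair_add_one i _)
  simp only [image_insert, image_singleton, Equiv.apply_symm_apply] at noncrossing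
  exact eq_add_one_or_eq_sub_one_of_weaklySep (by omega) (ρ.injective.ne (by simp)) noncrossing

end PreservesWeaklySep

/-- a permutation of `ℤ/nℤ` preserving weak separation of `k`-subsets
lies in the dihedral group `D_n`. -/
theorem mem_dihedral_of_preserves_weak_separation
    (n k : ℕ) (hn : 4 ≤ n) (hk : 2 ≤ k) (hkn : k ≤ n - 2)
    (ρ : Equiv.Perm (ZMod n))
    (hρ : ∀ I J : Finset (ZMod n), I.card = k → J.card = k →
      WeaklySep I J → WeaklySep (I.image ρ) (J.image ρ)) :
    ρ ∈ dihedral n := by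
  have : NeZero n := ⟨by omega⟩
  have preserves_pairs : PreservesWeaklySep 2 ρ :=
    PreservesWeaklySep.of_le ρ.injective hρ hk (by omega)
  exact mem_dihedral_of_map_add_one (preserves_pairs.map_add_one (by omega))
end

section
/- Let n ≥ 4 and 2 ≤ k ≤ n−2 be integers. The checkboard collection C^ch_{k,n} = { I^ch_{i,j} : 0 ≤ i ≤ n−k, 0 ≤ j ≤ k } is a maximal weakly separated collection of k-element subsets of ℤ/nℤ, and it has exactly k(n−k)+1 elements. -/
open Finset

/-!
For every level `s ≤ n` cut the cycle into the inner arc `(-⌈s/2⌉, ⌊s/2⌋]` and the complementary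
outer arc. The labels `I^ch_{i,j}` with `i + j = s` are exactly the `k`-sets meeting each of these
two arcs in a final segment. As `s` grows the inner arcs increase and the outer arcs decrease, so
for labels `I`, `J` of levels `s ≤ t`, at level `s` the set `I` is final on the outer arc and `J` is
final on the inner arc, and this already forces weak separation.

Maximality: if a `k`-set `J` is final on neither arc of level `s`, comparing it with the label of
level `s` having as many points in each arc exhibits a crossing. So a `J` weakly separated from all
labels is final on one of the two arcs at each level. Passing from `s` to `s + 1` moves a single
point from the outer to the inner arc; at the first level where `J` is final on the outer arc it is
therefore final on both, i.e. a label.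

Counting: the levels of a label form an interval, and for each `t < n` exactly one label of
level `t + 1` also has level `t`, leaving `(n - k + 1) * (k + 1) - n = k * (n - k) + 1` labels.
-/

/-! ### Integer representatives and the cyclic order -/

lemma intCast_zmod_injOn_Ioc (n : ℕ) (l : ℤ) :
    Set.InjOn (fun x : ℤ => (x : ZMod n)) (Set.Ioc l (l + n)) := by
  rintro x ⟨hlx, hxr⟩ y ⟨hly, hyr⟩ hxy
  have hdvd : (n : ℤ) ∣ y - x := (ZMod.intCast_eq_intCast_iff_dvd_sub x y n).1 hxy
  have hzero : y - x = 0 := Int.eq_zero_of_abs_lt_dvd hdvd (by rw [abs_lt]; omega)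
  omega

lemma exists_mem_Ioc_intCast_eq {n : ℕ} [NeZero n] (l : ℤ) (z : ZMod n) :
    ∃ x ∈ Set.Ioc l (l + n), (x : ZMod n) = z := by
  have hlt := ZMod.val_lt (z - ((l + 1 : ℤ) : ZMod n))
  refine ⟨l + 1 + (z - ((l + 1 : ℤ) : ZMod n)).val, ⟨by omega, by omega⟩, ?_⟩
  rw [Int.cast_add, Int.cast_natCast, ZMod.natCast_zmod_val, add_sub_cancel]

lemma intCast_add_modulus (n : ℕ) (x : ℤ) : ((x + n : ℤ) : ZMod n) = x := by
  simp

lemma val_intCast_sub_of_mem_Ioc {n : ℕ} [NeZero n] {l a b : ℤ} (ha : a ∈ Set.Ioc l (l + n))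
    (hb : b ∈ Set.Ioc l (l + n)) :
    (((b : ZMod n) - (a : ZMod n)).val : ℤ) = if a ≤ b then b - a else b - a + n := by
  obtain ⟨hla, har⟩ := ha
  obtain ⟨hlb, hbr⟩ := hb
  rw [← Int.cast_sub, ZMod.val_intCast]
  split_ifs with hab
  · exact Int.emod_eq_of_lt (by omega) (by omega)
  · rw [← Int.add_emod_right]
    exact Int.emod_eq_of_lt (by omega) (by omega)

lemma strictCyclicOrd_intCast_iff {n : ℕ} [NeZero n] {l a b c d : ℤ}
    (ha : a ∈ Set.Ioc l (l + n)) (hb : b ∈ Set.Ioc l (l + n))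
    (hc : c ∈ Set.Ioc l (l + n)) (hd : d ∈ Set.Ioc l (l + n)) :
    StrictCyclicOrd (a : ZMod n) b c d ↔
      (a < b ∧ b < c ∧ c < d) ∨ (b < c ∧ c < d ∧ d < a) ∨
        (c < d ∧ d < a ∧ a < b) ∨ (d < a ∧ a < b ∧ b < c) := by
  have hab := val_intCast_sub_of_mem_Ioc ha hb
  have hac := val_intCast_sub_of_mem_Ioc ha hc
  have had := val_intCast_sub_of_mem_Ioc ha hd
  simp only [Set.mem_Ioc] at ha hb hc hd
  unfold StrictCyclicOrd
  split_ifs at hab hac had <;> omega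

lemma StrictCyclicOrd.rotate {n : ℕ} [NeZero n] {a b c d : ZMod n}
    (h : StrictCyclicOrd a b c d) : StrictCyclicOrd b c d a := by
  obtain ⟨a, ha, rfl⟩ := exists_mem_Ioc_intCast_eq 0 a
  obtain ⟨b, hb, rfl⟩ := exists_mem_Ioc_intCast_eq 0 b
  obtain ⟨c, hc, rfl⟩ := exists_mem_Ioc_intCast_eq 0 c
  obtain ⟨d, hd, rfl⟩ := exists_mem_Ioc_intCast_eq 0 d
  rw [strictCyclicOrd_intCast_iff ha hb hc hd] at h
  rw [strictCyclicOrd_intCast_iff hb hc hd ha]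
  tauto

lemma WeaklySep.symm {n : ℕ} [NeZero n] {I J : Finset (ZMod n)} (h : WeaklySep I J) :
    WeaklySep J I :=
  fun ⟨a, c, b, d, ha, hc, hb, hd, hord⟩ => h ⟨b, d, c, a, hb, hd, hc, ha, hord.rotate⟩

/-! ### Traces on arcs -/

lemma exists_lt_of_card_eq_of_ne {α : Type*} [LinearOrder α] {A B : Finset α}
    (hA : ∀ v ∈ A, ∀ u ∈ B, v ≤ u → u ∈ A) (hcard : #A = #B) (hne : A ≠ B) :
    ∃ u ∈ B \ A, ∃ v ∈ A \ B, u < v := by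
  have hAB : ¬ A ⊆ B := fun h => hne (eq_of_subset_of_card_le h hcard.ge)
  have hBA : ¬ B ⊆ A := fun h => hne (eq_of_subset_of_card_le h hcard.le).symm
  obtain ⟨v, hvA, hvB⟩ := not_subset.1 hAB
  obtain ⟨u, huB, huA⟩ := not_subset.1 hBA
  refine ⟨u, mem_sdiff.2 ⟨huB, huA⟩, v, mem_sdiff.2 ⟨hvA, hvB⟩, ?_⟩
  exact lt_of_not_ge fun hvu => huA (hA v hvA u huB hvu)

/-- The trace of `J` on the arc `(l, r]`, as a set of integer representatives. It represents a
subset of `ℤ/nℤ` faithfully only for `r ≤ l + n`. -/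
noncomputable def arcTrace {n : ℕ} (J : Finset (ZMod n)) (l r : ℤ) : Finset ℤ :=
  {x ∈ Ioc l r | ((x : ℤ) : ZMod n) ∈ J}

/-- `J` meets the arc `(l, r]` in a final segment of that arc. -/
def FinalOn {n : ℕ} (J : Finset (ZMod n)) (l r : ℤ) : Prop :=
  ∀ ⦃x y : ℤ⦄, l < x → x ≤ y → y ≤ r → (x : ZMod n) ∈ J → (y : ZMod n) ∈ J

section Arcs

variable {n : ℕ} {I J : Finset (ZMod n)} {l m r : ℤ}

lemma mem_arcTrace {x : ℤ} : x ∈ arcTrace J l r ↔ (l < x ∧ x ≤ r) ∧ (x : ZMod n) ∈ J := by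
  rw [arcTrace, mem_filter, mem_Ioc]

lemma card_arcTrace_le (J : Finset (ZMod n)) (l r : ℤ) : #(arcTrace J l r) ≤ (r - l).toNat :=
  (card_filter_le _ _).trans_eq (Int.card_Ioc l r)

lemma card_arcTrace_full [NeZero n] (J : Finset (ZMod n)) (l : ℤ) :
    #(arcTrace J l (l + n)) = #J := by
  refine card_bij (fun x _ => (x : ZMod n)) (fun x hx => (mem_arcTrace.1 hx).2) ?_ ?_
  · intro x hx y hy hxy
    exact intCast_zmod_injOn_Ioc n l (mem_arcTrace.1 hx).1 (mem_arcTrace.1 hy).1 hxy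
  · intro z hz
    obtain ⟨x, hx, rfl⟩ := exists_mem_Ioc_intCast_eq l z
    exact ⟨x, mem_arcTrace.2 ⟨hx, hz⟩, rfl⟩

lemma card_arcTrace_add (J : Finset (ZMod n)) (hlm : l ≤ m) (hmr : m ≤ r) :
    #(arcTrace J l m) + #(arcTrace J m r) = #(arcTrace J l r) := by
  have hunion : Ioc l m ∪ Ioc m r = Ioc l r := Ioc_union_Ioc_eq_Ioc hlm hmr
  have hdisj : Disjoint (Ioc l m) (Ioc m r) := Ioc_disjoint_Ioc_of_le le_rfl
  rw [arcTrace, arcTrace, arcTrace, ← hunion, filter_union,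
    card_union_of_disjoint (disjoint_filter_filter hdisj)]

lemma eq_of_arcTrace_eq [NeZero n] (hlm : arcTrace I l m = arcTrace J l m)
    (hmr : arcTrace I m (l + n) = arcTrace J m (l + n)) : I = J := by
  ext z
  obtain ⟨x, ⟨hlx, hxr⟩, rfl⟩ := exists_mem_Ioc_intCast_eq l z
  rcases le_or_gt x m with hxm | hmx
  · simpa only [mem_arcTrace, hlx, hxm, and_self, true_and] using Finset.ext_iff.1 hlm x
  · simpa only [mem_arcTrace, hmx, hxr, and_self, true_and] using Finset.ext_iff.1 hmr x

namespace FinalOn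

lemma mono {l' r' : ℤ} (h : FinalOn J l r) (hl : l ≤ l') (hr : r' ≤ r) : FinalOn J l' r' :=
  fun _ _ hx hxy hy => h (hl.trans_lt hx) hxy (hy.trans hr)

lemma of_le (h : r ≤ l) : FinalOn J l r :=
  fun _ _ hx hxy hy => by omega

lemma exists_lt_of_card_eq (hI : FinalOn I l r) (hcard : #(arcTrace I l r) = #(arcTrace J l r))
    (hne : arcTrace I l r ≠ arcTrace J l r) :
    ∃ u v : ℤ, l < u ∧ u < v ∧ v ≤ r ∧ (u : ZMod n) ∈ J \ I ∧ (v : ZMod n) ∈ I \ J := by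
  have htrace : ∀ v ∈ arcTrace I l r, ∀ u ∈ arcTrace J l r, v ≤ u → u ∈ arcTrace I l r := by
    simp only [mem_arcTrace]
    exact fun v hv u hu hvu => ⟨hu.1, hI hv.1.1 hvu hu.1.2 hv.2⟩
  obtain ⟨u, hu, v, hv, huv⟩ := exists_lt_of_card_eq_of_ne htrace hcard hne
  simp only [mem_sdiff, mem_arcTrace] at hu hv ⊢
  exact ⟨u, v, hu.1.1.1, huv, hv.1.1.2, by tauto, by tauto⟩

lemma arcTrace_eq (hI : FinalOn I l r) (hJ : FinalOn J l r)
    (hcard : #(arcTrace I l r) = #(arcTrace J l r)) : arcTrace I l r = arcTrace J l r := by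
  by_contra hne
  obtain ⟨u, v, hlu, huv, hvr, hu, hv⟩ := hI.exists_lt_of_card_eq hcard hne
  exact (mem_sdiff.1 hv).2 (hJ hlu huv.le hvr (mem_sdiff.1 hu).1)

lemma congr (hI : FinalOn I l r) (h : arcTrace I l r = arcTrace J l r) : FinalOn J l r := by
  intro x y hx hxy hy hxJ
  have hxI : x ∈ arcTrace I l r := h ▸ mem_arcTrace.2 ⟨⟨hx, hxy.trans hy⟩, hxJ⟩
  have hyI : y ∈ arcTrace I l r :=
    mem_arcTrace.2 ⟨⟨hx.trans_le hxy, hy⟩, hI hx hxy hy (mem_arcTrace.1 hxI).2⟩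
  exact (mem_arcTrace.1 (h ▸ hyI)).2

lemma lt_of_mem_sdiff (hJ : FinalOn J l r) {u v : ℤ} (hv : l < v) (hu : u ≤ r)
    (huIJ : (u : ZMod n) ∈ I \ J) (hvJI : (v : ZMod n) ∈ J \ I) : u < v := by
  rw [mem_sdiff] at huIJ hvJI
  exact lt_of_not_ge fun hvu => huIJ.2 (hJ hv hvu hu hvJI.1)

end FinalOn

lemma finalOn_sub_one_iff : FinalOn J (l - 1) r ↔
    FinalOn J l r ∧ ((l : ZMod n) ∉ J ∨ #(arcTrace J l r) = #(Ioc l r)) := by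
  simp only [arcTrace, card_filter_eq_iff, mem_Ioc]
  refine ⟨fun h => ⟨h.mono (by omega) le_rfl, ?_⟩, ?_⟩
  · exact or_iff_not_imp_left.2 fun hl y hy => h (by omega) hy.1.le hy.2 (not_not.1 hl)
  · rintro ⟨h, hl⟩ x y hx hxy hy hxJ
    obtain rfl | hne := eq_or_ne x l
    · obtain rfl | hlt := hxy.eq_or_lt
      · exact hxJ
      · exact hl.resolve_left (not_not.2 hxJ) y ⟨hlt, hy⟩
    · exact h (by omega) hxy hy hxJ

lemma finalOn_add_one_iff : FinalOn J l (r + 1) ↔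
    FinalOn J l r ∧ (((r + 1 : ℤ) : ZMod n) ∈ J ∨ #(arcTrace J l r) = 0) := by
  simp only [card_eq_zero, eq_empty_iff_forall_notMem, mem_arcTrace, not_and]
  refine ⟨fun h => ⟨h.mono le_rfl (by omega), ?_⟩, ?_⟩
  · exact or_iff_not_imp_left.2 fun hr x hx hxJ => hr (h hx.1 (by omega) le_rfl hxJ)
  · rintro ⟨h, hr⟩ x y hx hxy hy hxJ
    obtain rfl | hne := eq_or_ne y (r + 1)
    · obtain rfl | hlt := hxy.eq_or_lt
      · exact hxJ
      · exact hr.resolve_right fun hempty => hempty x ⟨hx, by omega⟩ hxJ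
    · exact h hx hxy (by omega) hxJ

/-- Read along `(l, l + n]`, the points of the symmetric difference come in the order
`I ∖ J`, `J ∖ I` up to `m` and `J ∖ I`, `I ∖ J` beyond `m`: too few alternations for a crossing. -/
lemma weaklySep_of_finalOn [NeZero n] (hI : FinalOn I m (l + n)) (hJ : FinalOn J l m) :
    WeaklySep I J := by
  rintro ⟨a, c, b, d, ha, hc, hb, hd, hord⟩
  obtain ⟨a, haI, rfl⟩ := exists_mem_Ioc_intCast_eq l a
  obtain ⟨b, hbI, rfl⟩ := exists_mem_Ioc_intCast_eq l b
  obtain ⟨c, hcI, rfl⟩ := exists_mem_Ioc_intCast_eq l c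
  obtain ⟨d, hdI, rfl⟩ := exists_mem_Ioc_intCast_eq l d
  have order : ∀ u : ℤ, ∀ v ∈ Set.Ioc l (l + n), (u : ZMod n) ∈ I \ J →
      (v : ZMod n) ∈ J \ I → (u ≤ m → u < v) ∧ (m < u → v < u) := fun u v hv huIJ hvJI =>
    ⟨fun hum => hJ.lt_of_mem_sdiff hv.1 hum huIJ hvJI,
      fun hmu => hI.lt_of_mem_sdiff hmu hv.2 hvJI huIJ⟩
  have hab := order a b hbI ha hb
  have had := order a d hdI ha hd
  have hcb := order c b hbI hc hb
  have hcd := order c d hdI hc hd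
  rw [strictCyclicOrd_intCast_iff haI hbI hcI hdI] at hord
  omega

lemma not_weaklySep_of_not_finalOn [NeZero n] (hI₁ : FinalOn I l m) (hI₂ : FinalOn I m (l + n))
    (hJ₁ : ¬ FinalOn J l m) (hJ₂ : ¬ FinalOn J m (l + n))
    (hcard₁ : #(arcTrace I l m) = #(arcTrace J l m))
    (hcard₂ : #(arcTrace I m (l + n)) = #(arcTrace J m (l + n))) : ¬ WeaklySep J I := by
  obtain ⟨a, b, hla, hab, hbm, haJI, hbIJ⟩ :=
    hI₁.exists_lt_of_card_eq hcard₁ fun h => hJ₁ (hI₁.congr h)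
  obtain ⟨c, d, hmc, hcd, hdr, hcJI, hdIJ⟩ :=
    hI₂.exists_lt_of_card_eq hcard₂ fun h => hJ₂ (hI₂.congr h)
  have hord : StrictCyclicOrd (a : ZMod n) b c d :=
    (strictCyclicOrd_intCast_iff (l := l) ⟨by omega, by omega⟩ ⟨by omega, by omega⟩
      ⟨by omega, by omega⟩ ⟨by omega, by omega⟩).2 (Or.inl ⟨hab, by omega, hcd⟩)
  exact fun hws => hws ⟨a, c, b, d, haJI, hcJI, hbIJ, hdIJ, hord⟩

end Arcs

/-! ### Levels -/

/-- The (excluded) left endpoint `-⌈s/2⌉` of the inner arc `(-⌈s/2⌉, ⌊s/2⌋]` of level `s`; the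
outer arc ends at `arcLeft s + n`. -/
def arcLeft (s : ℕ) : ℤ := -(((s + 1) / 2 : ℕ) : ℤ)

/-- The (included) right endpoint `⌊s/2⌋` of the inner arc of level `s`, at which the outer arc
starts. -/
def arcRight (s : ℕ) : ℤ := ((s / 2 : ℕ) : ℤ)

/-- `J` is final on the inner arc of level `s`. -/
def InnerFinal {n : ℕ} (J : Finset (ZMod n)) (s : ℕ) : Prop :=
  FinalOn J (arcLeft s) (arcRight s)

/-- `J` is final on the outer arc of level `s`. -/
def OuterFinal {n : ℕ} (J : Finset (ZMod n)) (s : ℕ) : Prop :=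
  FinalOn J (arcRight s) (arcLeft s + n)

lemma arcRight_eq (s : ℕ) : arcRight s = arcLeft s + s := by
  unfold arcRight arcLeft; omega

lemma arcLeft_anti {s t : ℕ} (h : s ≤ t) : arcLeft t ≤ arcLeft s := by
  unfold arcLeft; omega

lemma arcRight_mono {s t : ℕ} (h : s ≤ t) : arcRight s ≤ arcRight t := by
  unfold arcRight; omega

lemma arc_succ_of_even {s : ℕ} (hs : Even s) :
    arcLeft (s + 1) = arcLeft s - 1 ∧ arcRight (s + 1) = arcRight s := by
  rw [Nat.even_iff] at hs
  unfold arcLeft arcRight; omega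

lemma arc_succ_of_odd {s : ℕ} (hs : Odd s) :
    arcLeft (s + 1) = arcLeft s ∧ arcRight (s + 1) = arcRight s + 1 := by
  rw [Nat.odd_iff] at hs
  unfold arcLeft arcRight; omega

section Levels

variable {n : ℕ} {I J : Finset (ZMod n)} {s t : ℕ}

lemma InnerFinal.anti (h : InnerFinal J t) (hst : s ≤ t) : InnerFinal J s :=
  FinalOn.mono h (arcLeft_anti hst) (arcRight_mono hst)

lemma OuterFinal.mono (h : OuterFinal J s) (hst : s ≤ t) : OuterFinal J t :=
  FinalOn.mono h (arcRight_mono hst) (by have := arcLeft_anti hst; omega)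

lemma innerFinal_zero (J : Finset (ZMod n)) : InnerFinal J 0 :=
  FinalOn.of_le (arcRight_eq 0).le

lemma outerFinal_modulus (J : Finset (ZMod n)) : OuterFinal J n :=
  FinalOn.of_le (arcRight_eq n).ge

/-- According to whether it belongs to `J`, the one point changing arcs extends the final segment
of one of the two arcs. -/
lemma innerFinal_succ_or_outerFinal (hin : InnerFinal J s) (hout : OuterFinal J (s + 1)) :
    InnerFinal J (s + 1) ∨ OuterFinal J s := by
  unfold InnerFinal OuterFinal at *
  rcases Nat.even_or_odd s with hs | hs
  · obtain ⟨hleft, hright⟩ := arc_succ_of_even hs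
    have hend : arcLeft s + n = arcLeft (s + 1) + n + 1 := by omega
    by_cases hp : (arcLeft s : ZMod n) ∈ J
    · rw [← intCast_add_modulus, hend] at hp
      rw [hend, ← hright]
      exact Or.inr (finalOn_add_one_iff.2 ⟨hout, Or.inl hp⟩)
    · rw [hleft, hright]
      exact Or.inl (finalOn_sub_one_iff.2 ⟨hin, Or.inl hp⟩)
  · obtain ⟨hleft, hright⟩ := arc_succ_of_odd hs
    have hstart : arcRight s = arcRight (s + 1) - 1 := by omega
    by_cases hp : (arcRight (s + 1) : ZMod n) ∈ J
    · rw [hright] at hp ⊢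
      rw [hleft]
      exact Or.inl (finalOn_add_one_iff.2 ⟨hin, Or.inl hp⟩)
    · rw [hstart, ← hleft]
      exact Or.inr (finalOn_sub_one_iff.2 ⟨hout, Or.inl hp⟩)

lemma exists_innerFinal_and_outerFinal (h : ∀ s ≤ n, InnerFinal J s ∨ OuterFinal J s) :
    ∃ s ≤ n, InnerFinal J s ∧ OuterFinal J s := by
  classical
  have hex : ∃ s, OuterFinal J s := ⟨n, outerFinal_modulus J⟩
  have hle : Nat.find hex ≤ n := Nat.find_min' hex (outerFinal_modulus J)
  refine ⟨Nat.find hex, hle, ?_, Nat.find_spec hex⟩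
  rcases hs : Nat.find hex with _ | s
  · exact innerFinal_zero J
  · have hout : OuterFinal J (s + 1) := hs ▸ Nat.find_spec hex
    have hnot : ¬ OuterFinal J s := Nat.find_min hex (by omega)
    have hin : InnerFinal J s := (h s (by omega)).resolve_right hnot
    exact (innerFinal_succ_or_outerFinal hin hout).resolve_right hnot

lemma card_innerTrace_add_card_outerTrace [NeZero n] (J : Finset (ZMod n)) (hs : s ≤ n) :
    #(arcTrace J (arcLeft s) (arcRight s)) + #(arcTrace J (arcRight s) (arcLeft s + n)) = #J := by
  have hright := arcRight_eq s
  rw [card_arcTrace_add J (by omega) (by omega), card_arcTrace_full]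

lemma eq_of_innerFinal_of_outerFinal [NeZero n] (hs : s ≤ n) (hIin : InnerFinal I s)
    (hIout : OuterFinal I s) (hJin : InnerFinal J s) (hJout : OuterFinal J s) (hcard : #I = #J)
    (hinner : #(arcTrace I (arcLeft s) (arcRight s)) = #(arcTrace J (arcLeft s) (arcRight s))) :
    I = J := by
  have hI := card_innerTrace_add_card_outerTrace I hs
  have hJ := card_innerTrace_add_card_outerTrace J hs
  exact eq_of_arcTrace_eq (FinalOn.arcTrace_eq hIin hJin hinner)
    (FinalOn.arcTrace_eq hIout hJout (by omega))

end Levels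

/-! ### Checkboard labels -/

lemma intCast_mem_seg_iff {n m : ℕ} (hm : m ≤ n) {x : ℤ} (hx : x ∈ Set.Ioc 0 (n : ℤ)) :
    (x : ZMod n) ∈ seg n m ↔ x ≤ m := by
  obtain ⟨hpos, hxn⟩ := hx
  simp only [seg, mem_image, mem_Icc]
  constructor
  · rintro ⟨t, ht, htx⟩
    have heq : (t : ℤ) = x :=
      intCast_zmod_injOn_Ioc n 0 ⟨by omega, by omega⟩ ⟨by omega, by omega⟩ (by simpa using htx)
    omega
  · intro hxm
    lift x to ℕ using hpos.le
    exact ⟨x, by omega, (Int.cast_natCast x).symm⟩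

lemma intCast_mem_Ich_iff_sub_arcLeft_mem_Irec {k n i j : ℕ} {x : ℤ} :
    (x : ZMod n) ∈ Ich k n i j ↔ ((x - arcLeft (i + j) : ℤ) : ZMod n) ∈ Irec k n i j := by
  simp only [Ich, arcLeft, mem_image, sub_eq_iff_eq_add, exists_eq_right, sub_neg_eq_add,
    Int.cast_add, Int.cast_natCast]

section Labels

variable {k n i j : ℕ}

lemma intCast_mem_Ich_iff (hi : i + k ≤ n) (hj : j ≤ k) {x : ℤ}
    (hx : x ∈ Set.Ioc (arcLeft (i + j)) (arcLeft (i + j) + n)) :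
    (x : ZMod n) ∈ Ich k n i j ↔
      (arcRight (i + j) - j < x ∧ x ≤ arcRight (i + j)) ∨ arcLeft (i + j) + n - (k - j) < x := by
  obtain ⟨hlx, hxr⟩ := hx
  have hright := arcRight_eq (i + j)
  have hshift : x - arcLeft (i + j) ∈ Set.Ioc 0 (n : ℤ) := ⟨by omega, by omega⟩
  rw [intCast_mem_Ich_iff_sub_arcLeft_mem_Irec, Irec, mem_union, mem_sdiff, mem_sdiff,
    intCast_mem_seg_iff (by omega) hshift, intCast_mem_seg_iff (by omega) hshift,
    intCast_mem_seg_iff le_rfl hshift, intCast_mem_seg_iff (by omega) hshift]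
  omega

lemma innerFinal_Ich (hi : i + k ≤ n) (hj : j ≤ k) : InnerFinal (Ich k n i j) (i + j) := by
  intro x y hx hxy hy hmem
  have hright := arcRight_eq (i + j)
  rw [intCast_mem_Ich_iff hi hj ⟨by omega, by omega⟩] at hmem ⊢
  omega

lemma outerFinal_Ich (hi : i + k ≤ n) (hj : j ≤ k) : OuterFinal (Ich k n i j) (i + j) := by
  intro x y hx hxy hy hmem
  have hright := arcRight_eq (i + j)
  rw [intCast_mem_Ich_iff hi hj ⟨by omega, by omega⟩] at hmem ⊢
  omega

lemma card_innerTrace_Ich (hi : i + k ≤ n) (hj : j ≤ k) :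
    #(arcTrace (Ich k n i j) (arcLeft (i + j)) (arcRight (i + j))) = j := by
  have hright := arcRight_eq (i + j)
  have htrace : arcTrace (Ich k n i j) (arcLeft (i + j)) (arcRight (i + j)) =
      Ioc (arcRight (i + j) - j) (arcRight (i + j)) := by
    ext x
    rw [mem_arcTrace, mem_Ioc, and_congr_right fun hx =>
      intCast_mem_Ich_iff hi hj ⟨by omega, by omega⟩]
    omega
  rw [htrace, Int.card_Ioc]
  omega

lemma card_outerTrace_Ich (hi : i + k ≤ n) (hj : j ≤ k) :
    #(arcTrace (Ich k n i j) (arcRight (i + j)) (arcLeft (i + j) + n)) = k - j := by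
  have hright := arcRight_eq (i + j)
  have htrace : arcTrace (Ich k n i j) (arcRight (i + j)) (arcLeft (i + j) + n) =
      Ioc (arcLeft (i + j) + n - (k - j)) (arcLeft (i + j) + n) := by
    ext x
    rw [mem_arcTrace, mem_Ioc, and_congr_right fun hx =>
      intCast_mem_Ich_iff hi hj ⟨by omega, by omega⟩]
    omega
  rw [htrace, Int.card_Ioc]
  omega

variable [NeZero n]

lemma card_Ich (hi : i + k ≤ n) (hj : j ≤ k) : #(Ich k n i j) = k := by
  rw [← card_innerTrace_add_card_outerTrace (s := i + j) _ (by omega), card_innerTrace_Ich hi hj,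
    card_outerTrace_Ich hi hj]
  omega

lemma weaklySep_Ich_of_le {i' j' : ℕ} (hi : i + k ≤ n) (hj : j ≤ k) (hi' : i' + k ≤ n)
    (hj' : j' ≤ k) (hle : i + j ≤ i' + j') : WeaklySep (Ich k n i j) (Ich k n i' j') :=
  weaklySep_of_finalOn (outerFinal_Ich hi hj) ((innerFinal_Ich hi' hj').anti hle)

lemma weaklySep_Ich {i' j' : ℕ} (hi : i + k ≤ n) (hj : j ≤ k) (hi' : i' + k ≤ n) (hj' : j' ≤ k) :
    WeaklySep (Ich k n i j) (Ich k n i' j') := by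
  rcases le_total (i + j) (i' + j') with hle | hle
  · exact weaklySep_Ich_of_le hi hj hi' hj' hle
  · exact (weaklySep_Ich_of_le hi' hj' hi hj hle).symm

variable {J : Finset (ZMod n)} {s : ℕ}

lemma exists_Ich_card_innerTrace_eq (hJ : #J = k) (hs : s ≤ n) :
    ∃ i j, i + k ≤ n ∧ j ≤ k ∧ i + j = s ∧
      #(arcTrace (Ich k n i j) (arcLeft s) (arcRight s)) =
        #(arcTrace J (arcLeft s) (arcRight s)) := by
  have hadd := card_innerTrace_add_card_outerTrace J hs
  have hinner := card_arcTrace_le J (arcLeft s) (arcRight s)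
  have houter := card_arcTrace_le J (arcRight s) (arcLeft s + n)
  have hright := arcRight_eq s
  generalize #(arcTrace J (arcLeft s) (arcRight s)) = j at *
  obtain ⟨i, rfl⟩ : ∃ i, s = i + j := ⟨s - j, by omega⟩
  have hi : i + k ≤ n := by omega
  have hj : j ≤ k := by omega
  exact ⟨i, j, hi, hj, rfl, card_innerTrace_Ich hi hj⟩

lemma exists_eq_Ich_of_innerFinal_of_outerFinal (hJ : #J = k) (hs : s ≤ n)
    (hin : InnerFinal J s) (hout : OuterFinal J s) :
    ∃ i j, i + k ≤ n ∧ j ≤ k ∧ i + j = s ∧ J = Ich k n i j := by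
  obtain ⟨i, j, hi, hj, rfl, hcard⟩ := exists_Ich_card_innerTrace_eq hJ hs
  exact ⟨i, j, hi, hj, rfl, eq_of_innerFinal_of_outerFinal hs hin hout (innerFinal_Ich hi hj)
    (outerFinal_Ich hi hj) (hJ.trans (card_Ich hi hj).symm) hcard.symm⟩

lemma innerFinal_or_outerFinal_of_weaklySep (hJ : #J = k)
    (hws : ∀ i j, i + k ≤ n → j ≤ k → WeaklySep J (Ich k n i j)) (hs : s ≤ n) :
    InnerFinal J s ∨ OuterFinal J s := by
  by_contra! ⟨hin, hout⟩
  obtain ⟨i, j, hi, hj, rfl, hcard⟩ := exists_Ich_card_innerTrace_eq hJ hs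
  have hJadd := card_innerTrace_add_card_outerTrace J hs
  have hLadd := card_innerTrace_add_card_outerTrace (Ich k n i j) hs
  rw [card_Ich hi hj] at hLadd
  exact not_weaklySep_of_not_finalOn (innerFinal_Ich hi hj) (outerFinal_Ich hi hj) hin hout hcard
    (by omega) (hws i j hi hj)

lemma exists_eq_Ich_of_weaklySep (hJ : #J = k)
    (hws : ∀ i j, i + k ≤ n → j ≤ k → WeaklySep J (Ich k n i j)) :
    ∃ i j, i + k ≤ n ∧ j ≤ k ∧ J = Ich k n i j := by
  obtain ⟨s, hs, hin, hout⟩ := exists_innerFinal_and_outerFinal fun s hs =>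
    innerFinal_or_outerFinal_of_weaklySep hJ hws hs
  obtain ⟨i, j, hi, hj, -, heq⟩ := exists_eq_Ich_of_innerFinal_of_outerFinal hJ hs hin hout
  exact ⟨i, j, hi, hj, heq⟩

end Labels

/-! ### The checkboard collection -/

/-- The cells `(i, j)` of the checkboard, indexing the labels `I^ch_{i,j}` with repetitions. -/
def cells (k n : ℕ) : Finset (ℕ × ℕ) := range (n - k + 1) ×ˢ range (k + 1)

section Collection

variable {k n : ℕ}

lemma mk_mem_cells (hk : k ≤ n) {i j : ℕ} : (i, j) ∈ cells k n ↔ i + k ≤ n ∧ j ≤ k := by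
  simp only [cells, mem_product, mem_range]
  omega

lemma mem_Cch (hk : k ≤ n) {J : Finset (ZMod n)} :
    J ∈ Cch k n ↔ ∃ i j, i + k ≤ n ∧ j ≤ k ∧ J = Ich k n i j := by
  change J ∈ (cells k n).image _ ↔ _
  simp only [mem_image, Prod.exists, mk_mem_cells hk, and_assoc, eq_comm]

variable [NeZero n]

lemma isWSColl_Cch (hk : k ≤ n) : IsWSColl n k (Cch k n : Set (Finset (ZMod n))) := by
  simp only [IsWSColl, mem_coe, mem_Cch hk]
  constructor
  · rintro _ ⟨i, j, hi, hj, rfl⟩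
    exact card_Ich hi hj
  · rintro _ ⟨i, j, hi, hj, rfl⟩ _ ⟨i', j', hi', hj', rfl⟩
    exact weaklySep_Ich hi hj hi' hj'

theorem isMaxWSColl_Cch (hk : k ≤ n) : IsMaxWSColl n k (Cch k n : Set (Finset (ZMod n))) := by
  refine ⟨isWSColl_Cch hk, fun C hC hsub => Set.Subset.antisymm (fun J hJ => ?_) hsub⟩
  refine (mem_Cch hk).2 (exists_eq_Ich_of_weaklySep (hC.1 J hJ) fun i j hi hj => ?_)
  exact hC.2 J hJ _ (hsub ((mem_Cch hk).2 ⟨i, j, hi, hj, rfl⟩))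

end Collection

/-! ### Repeated labels -/

/-- For `t < n`, the unique cell of level `t + 1` whose label is also a label of level `t`; see
`outerFinal_Ich_iff_eq_repeatedCell`. -/
def repeatedCell (k n t : ℕ) : ℕ × ℕ :=
  if Even t then (t + 1 - min (t + 1) k, min (t + 1) k)
  else (min (t + 1) (n - k), t + 1 - min (t + 1) (n - k))

/-- The cells that are not repeated, i.e. those whose label does not occur at any lower level. -/
def freshCells (k n : ℕ) : Finset (ℕ × ℕ) := cells k n \ (range n).image (repeatedCell k n)

section Counting

variable {k n i j t : ℕ}

/-- For even `t` the point changing arcs is the right end of the outer arc of level `t`, for odd `t`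
its left end. -/
lemma outerFinal_Ich_iff (hi : i + k ≤ n) (hj : j ≤ k) (ht : i + j = t + 1) :
    OuterFinal (Ich k n i j) t ↔ if Even t then i = 0 ∨ j = k else j = 0 ∨ i + k = n := by
  have hlength := arcRight_eq (i + j)
  have hout := outerFinal_Ich hi hj
  have hcard := card_outerTrace_Ich hi hj
  unfold OuterFinal at *
  split_ifs with hpar
  · obtain ⟨hleft, hright⟩ := arc_succ_of_even hpar
    rw [← ht] at hleft hright
    have hend : arcLeft t + n = arcLeft (i + j) + n + 1 := by omega
    have hp : ((arcLeft (i + j) + n + 1 : ℤ) : ZMod n) ∈ Ich k n i j ↔ i = 0 := by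
      rw [← hend, intCast_add_modulus, intCast_mem_Ich_iff hi hj ⟨by omega, by omega⟩]
      omega
    rw [← hright, hend, finalOn_add_one_iff, and_iff_right hout, hp, hcard]
    omega
  · obtain ⟨hleft, hright⟩ := arc_succ_of_odd (Nat.not_even_iff_odd.1 hpar)
    rw [← ht] at hleft hright
    have hstart : arcRight t = arcRight (i + j) - 1 := by omega
    have hp : (arcRight (i + j) : ZMod n) ∉ Ich k n i j ↔ j = 0 := by
      rw [intCast_mem_Ich_iff hi hj ⟨by omega, by omega⟩]
      omega
    rw [← hleft, hstart, finalOn_sub_one_iff, and_iff_right hout, hp, hcard, Int.card_Ioc]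
    omega

lemma eq_repeatedCell_iff (hi : i + k ≤ n) (hj : j ≤ k) (ht : i + j = t + 1) :
    (i, j) = repeatedCell k n t ↔ if Even t then i = 0 ∨ j = k else j = 0 ∨ i + k = n := by
  unfold repeatedCell
  split_ifs <;> rw [Prod.mk.injEq] <;> omega

lemma outerFinal_Ich_iff_eq_repeatedCell (hi : i + k ≤ n) (hj : j ≤ k) (ht : i + j = t + 1) :
    OuterFinal (Ich k n i j) t ↔ (i, j) = repeatedCell k n t :=
  (outerFinal_Ich_iff hi hj ht).trans (eq_repeatedCell_iff hi hj ht).symm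

lemma repeatedCell_fst_add_snd (k n t : ℕ) :
    (repeatedCell k n t).1 + (repeatedCell k n t).2 = t + 1 := by
  unfold repeatedCell
  split_ifs <;> dsimp only <;> omega

lemma repeatedCell_mem_cells (hk : k ≤ n) (ht : t < n) : repeatedCell k n t ∈ cells k n := by
  rw [mk_mem_cells hk]
  unfold repeatedCell
  split_ifs <;> dsimp only <;> omega

lemma card_repeatedCells (k n : ℕ) : #((range n).image (repeatedCell k n)) = n := by
  have hinj : Function.Injective (repeatedCell k n) := fun s t hst => by
    have hs := repeatedCell_fst_add_snd k n s
    have ht := repeatedCell_fst_add_snd k n t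
    rw [hst] at hs
    omega
  rw [card_image_of_injective _ hinj, card_range]

lemma card_freshCells (hk : k ≤ n) : #(freshCells k n) = k * (n - k) + 1 := by
  have hsub : (range n).image (repeatedCell k n) ⊆ cells k n :=
    image_subset_iff.2 fun t ht => repeatedCell_mem_cells hk (mem_range.1 ht)
  rw [freshCells, card_sdiff_of_subset hsub, card_repeatedCells, cells, card_product, card_range,
    card_range]
  obtain ⟨m, rfl⟩ := Nat.exists_eq_add_of_le hk
  rw [Nat.add_sub_cancel_left, Nat.sub_eq_iff_eq_add (by nlinarith)]
  ring

lemma mk_mem_freshCells (hk : k ≤ n) : (i, j) ∈ freshCells k n ↔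
    (i + k ≤ n ∧ j ≤ k) ∧ ∀ t, i + j = t + 1 → ¬ OuterFinal (Ich k n i j) t := by
  rw [freshCells, mem_sdiff, mk_mem_cells hk]
  refine and_congr_right fun ⟨hi, hj⟩ => ?_
  simp only [mem_image, mem_range, not_exists, not_and]
  refine forall_congr' fun t => ?_
  constructor
  · intro hne ht hout
    exact hne (by omega) ((outerFinal_Ich_iff_eq_repeatedCell hi hj ht).1 hout).symm
  · intro hout _ heq
    have ht : i + j = t + 1 := by simpa only [heq] using repeatedCell_fst_add_snd k n t
    exact hout ht ((outerFinal_Ich_iff_eq_repeatedCell hi hj ht).2 heq.symm)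

lemma notMem_freshCells_of_Ich_eq {i' j' : ℕ} (hk : k ≤ n) (hi : i + k ≤ n) (hj : j ≤ k)
    (heq : Ich k n i j = Ich k n i' j') (hlt : i + j < i' + j') : (i', j') ∉ freshCells k n := by
  obtain ⟨t, ht⟩ : ∃ t, i' + j' = t + 1 := ⟨i' + j' - 1, by omega⟩
  have hout : OuterFinal (Ich k n i' j') t := heq ▸ (outerFinal_Ich hi hj).mono (by omega)
  exact fun hfresh => ((mk_mem_freshCells hk).1 hfresh).2 t ht hout

lemma injOn_Ich_freshCells (hk : k ≤ n) :
    Set.InjOn (fun p : ℕ × ℕ => Ich k n p.1 p.2) (freshCells k n) := by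
  rintro ⟨i, j⟩ hp ⟨i', j'⟩ hq (heq : Ich k n i j = Ich k n i' j')
  obtain ⟨hi, hj⟩ := ((mk_mem_freshCells hk).1 hp).1
  obtain ⟨hi', hj'⟩ := ((mk_mem_freshCells hk).1 hq).1
  rcases lt_trichotomy (i + j) (i' + j') with hlt | hlevel | hlt
  · exact absurd hq (notMem_freshCells_of_Ich_eq hk hi hj heq hlt)
  · have hcard := card_innerTrace_Ich hi hj
    rw [heq, hlevel, card_innerTrace_Ich hi' hj'] at hcard
    rw [Prod.mk.injEq]
    omega
  · exact absurd hp (notMem_freshCells_of_Ich_eq hk hi' hj' heq.symm hlt)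

variable [NeZero n]

lemma exists_mem_freshCells_Ich_eq (hk : k ≤ n) {J : Finset (ZMod n)} (hJ : J ∈ Cch k n) :
    ∃ p ∈ freshCells k n, Ich k n p.1 p.2 = J := by
  classical
  have hex : ∃ s i j, i + k ≤ n ∧ j ≤ k ∧ i + j = s ∧ J = Ich k n i j := by
    obtain ⟨i, j, hi, hj, heq⟩ := (mem_Cch hk).1 hJ
    exact ⟨i + j, i, j, hi, hj, rfl, heq⟩
  obtain ⟨i, j, hi, hj, hlevel, heq⟩ := Nat.find_spec hex
  refine ⟨(i, j), (mk_mem_freshCells hk).2 ⟨⟨hi, hj⟩, fun t ht hout => ?_⟩, heq.symm⟩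
  have hin : InnerFinal (Ich k n i j) t := (innerFinal_Ich hi hj).anti (by omega)
  have hlower := exists_eq_Ich_of_innerFinal_of_outerFinal (card_Ich hi hj) (by omega) hin hout
  exact Nat.find_min hex (m := t) (by omega) (heq ▸ hlower)

lemma Cch_eq_image_freshCells (hk : k ≤ n) :
    Cch k n = (freshCells k n).image fun p => Ich k n p.1 p.2 := by
  refine Subset.antisymm (fun J hJ => mem_image.2 (exists_mem_freshCells_Ich_eq hk hJ)) ?_
  exact image_subset_image sdiff_subset

theorem card_Cch (hk : k ≤ n) : #(Cch k n) = k * (n - k) + 1 := by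
  rw [Cch_eq_image_freshCells hk, card_image_of_injOn (injOn_Ich_freshCells hk),
    card_freshCells hk]

end Counting

/-- the checkboard collection is a maximal weakly separated collection of
`k`-subsets of `ℤ/nℤ` with exactly `k(n−k)+1` elements. -/
theorem checkboard_isMaxWSColl_card
    (n k : ℕ) (hn : 4 ≤ n) (hk : 2 ≤ k) (hkn : k ≤ n - 2) :
    IsMaxWSColl n k (↑(Cch k n) : Set (Finset (ZMod n))) ∧
      (Cch k n).card = k * (n - k) + 1 := by
  have : NeZero n := ⟨by omega⟩
  have hle : k ≤ n := by omega
  exact ⟨isMaxWSColl_Cch hle, card_Cch hle⟩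
end

section
/- Let n ≥ 4 and 2 ≤ k ≤ n−2 be integers. If k is even, then σ^{k/2}·C^ch_{k,n} = Ĉ^ch_{k,n}, and more precisely σ^{k/2}(I^ch_{i,j}) = Î^ch_{k−j, i} for all 0 ≤ i ≤ n−k and 0 ≤ j ≤ k. If n−k is even, then σ^{−(n−k)/2}·C^ch_{k,n} = Ĉ^ch_{k,n}, and more precisely σ^{−(n−k)/2}(I^ch_{i,j}) = Î^ch_{j, n−k−i} for all 0 ≤ i ≤ n−k and 0 ≤ j ≤ k. -/
open Finset

/-!
Modulo `n`, the rectangle label `I^rec_{i,j}` is the union of the arcs `(i, i+j]` and `(j-k, 0]`,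
while `Î^rec_{i,j}` is the union of `(0, i]` and `(i+j, k+j]`. Hence, whatever the parities,
`σ^{k-j} I^rec_{i,j} = Î^rec_{k-j,i}` and `σ^{-i} I^rec_{i,j} = Î^rec_{j,n-k-i}`. For the checkboard
labels the exponents become `k-j+⌈(i+j)/2⌉-⌈(k-j+i)/2⌉` and `-i+⌈(i+j)/2⌉-⌈(j+n-k-i)/2⌉`; when `k`,
respectively `n-k`, is even, its half comes out of the last ceiling and these are `k/2` and
`-(n-k)/2`, whatever `(i,j)` is.
-/

section Arc

/-- The cyclic interval `(a, b]` of `ℤ/nℤ`, as the image of the integer interval. Integer endpoints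
make rotation a translation of the endpoints. It is meant for `b ≤ a + n`, and is empty
when `b ≤ a`. -/
noncomputable def arc (n : ℕ) (a b : ℤ) : Finset (ZMod n) :=
  (Ioc a b).image (fun t : ℤ => (t : ZMod n))

variable {n : ℕ}

lemma image_add_intCast_arc (a b m : ℤ) :
    (arc n a b).image (fun x => x + (m : ZMod n)) = arc n (a + m) (b + m) := by
  rw [arc, arc, ← image_add_right_Ioc, image_image, image_image]
  simp only [Function.comp_def, Int.cast_add]

lemma arc_add_period (a b : ℤ) : arc n (a + n) (b + n) = arc n a b := by
  simpa using (image_add_intCast_arc (n := n) a b n).symm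

lemma intCast_injOn_Ioc {a b : ℤ} (hba : b ≤ a + n) :
    Set.InjOn (fun t : ℤ => (t : ZMod n)) (Ioc a b) := by
  intro s hs t ht hst
  rw [mem_coe, mem_Ioc] at hs ht
  have hdvd : (n : ℤ) ∣ t - s := (ZMod.intCast_eq_intCast_iff_dvd_sub s t n).mp hst
  have habs : |t - s| < n := abs_lt.mpr (by lia)
  exact (sub_eq_zero.mp (Int.eq_zero_of_abs_lt_dvd hdvd habs)).symm

lemma arc_sdiff_arc {a b c : ℤ} (hab : a ≤ b) (hbc : b ≤ c) (hca : c ≤ a + n) :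
    arc n a c \ arc n a b = arc n b c := by
  have hIoc : Ioc a c \ Ioc a b = Ioc b c := by
    ext t
    simp only [mem_sdiff, mem_Ioc]
    lia
  rw [arc, arc, ← image_sdiff_of_injOn (intCast_injOn_Ioc hca) (Ioc_subset_Ioc_right hbc), hIoc,
    arc]

lemma seg_eq_arc (n m : ℕ) : seg n m = arc n 0 m := by
  ext x
  simp only [seg, arc, mem_image, mem_Icc, mem_Ioc]
  constructor
  · rintro ⟨t, ht, rfl⟩
    exact ⟨t, by lia, Int.cast_natCast t⟩
  · rintro ⟨t, ht, rfl⟩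
    lift t to ℕ using ht.1.le
    exact ⟨t, by lia, (Int.cast_natCast t).symm⟩

lemma seg_sdiff_seg {a b : ℕ} (hab : a ≤ b) (hbn : b ≤ n) : seg n b \ seg n a = arc n a b := by
  rw [seg_eq_arc, seg_eq_arc, arc_sdiff_arc] <;> lia

end Arc

section Labels

variable {n k i j : ℕ}

lemma Irec_eq_arc_union_arc (hkn : k ≤ n) (hi : i ≤ n - k) (hj : j ≤ k) :
    Irec k n i j = arc n i (i + j) ∪ arc n (j - k) 0 := by
  rw [Irec, seg_sdiff_seg (by lia) (by lia), seg_sdiff_seg (by lia) le_rfl,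
    ← arc_add_period (j - k) 0]
  congr 2 <;> lia

lemma Drec_eq_arc_union_arc (hkn : k ≤ n) (hi : i ≤ k) (hj : j ≤ n - k) :
    Drec k n i j = arc n 0 i ∪ arc n (i + j) (k + j) := by
  rw [Drec, seg_eq_arc, seg_sdiff_seg (by lia) (by lia)]
  simp only [Nat.cast_add]

lemma image_add_Irec (hkn : k ≤ n) (hi : i ≤ n - k) (hj : j ≤ k) :
    (Irec k n i j).image (fun x => x + ((k - j : ℕ) : ZMod n)) = Drec k n (k - j) i := by
  rw [Irec_eq_arc_union_arc hkn hi hj, Drec_eq_arc_union_arc hkn (k.sub_le j) hi,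
    ← Int.cast_natCast (k - j), image_union, image_add_intCast_arc, image_add_intCast_arc,
    union_comm]
  congr 2 <;> lia

lemma image_sub_Irec (hkn : k ≤ n) (hi : i ≤ n - k) (hj : j ≤ k) :
    (Irec k n i j).image (fun x => x - (i : ZMod n)) = Drec k n j (n - k - i) := by
  have hsub : (fun x : ZMod n => x - (i : ZMod n)) = fun x => x + ((-i : ℤ) : ZMod n) := by
    funext x
    push_cast
    ring
  rw [Irec_eq_arc_union_arc hkn hi hj, Drec_eq_arc_union_arc hkn hj ((n - k).sub_le i), hsub,
    image_union, image_add_intCast_arc, image_add_intCast_arc, ← arc_add_period (j - k + -i)]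
  congr 2 <;> lia

lemma image_add_Ich_of_even (hkn : k ≤ n) (hk : Even k) (hi : i ≤ n - k) (hj : j ≤ k) :
    (Ich k n i j).image (fun x => x + ((k / 2 : ℕ) : ZMod n)) = Dch k n (k - j) i := by
  have hshift : k / 2 + (k - j + i + 1) / 2 = (k - j) + (i + j + 1) / 2 := by grind
  have hcast := congrArg (Nat.cast : ℕ → ZMod n) hshift
  rw [Nat.cast_add, Nat.cast_add] at hcast
  rw [Ich, Dch, ← image_add_Irec hkn hi hj, image_image, image_image]
  refine image_congr fun x _ => ?_
  simp only [Function.comp_apply]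
  linear_combination hcast

lemma image_sub_Ich_of_even (hkn : k ≤ n) (hnk : Even (n - k)) (hi : i ≤ n - k) (hj : j ≤ k) :
    (Ich k n i j).image (fun x => x - (((n - k) / 2 : ℕ) : ZMod n)) = Dch k n j (n - k - i) := by
  have hshift : i + (j + (n - k - i) + 1) / 2 = (n - k) / 2 + (i + j + 1) / 2 := by grind
  have hcast := congrArg (Nat.cast : ℕ → ZMod n) hshift
  rw [Nat.cast_add, Nat.cast_add] at hcast
  rw [Ich, Dch, ← image_sub_Irec hkn hi hj, image_image, image_image]
  refine image_congr fun x _ => ?_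
  simp only [Function.comp_apply]
  linear_combination hcast

end Labels

section Collections

lemma image_sub_snd_fst_range_product (a b : ℕ) :
    (range (a + 1) ×ˢ range (b + 1)).image (fun p => (b - p.2, p.1)) =
      range (b + 1) ×ˢ range (a + 1) := by
  ext ⟨i, j⟩
  simp only [mem_image, mem_product, mem_range, Prod.exists, Prod.mk.injEq]
  exact ⟨by lia, fun h => ⟨j, b - i, by lia⟩⟩

lemma image_snd_sub_fst_range_product (a b : ℕ) :
    (range (a + 1) ×ˢ range (b + 1)).image (fun p => (p.2, a - p.1)) =
      range (b + 1) ×ˢ range (a + 1) := by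
  ext ⟨i, j⟩
  simp only [mem_image, mem_product, mem_range, Prod.exists, Prod.mk.injEq]
  exact ⟨by lia, fun h => ⟨a - j, i, by lia⟩⟩

variable {n k : ℕ}

lemma image_Cch_eq_CDch {F : Finset (ZMod n) → Finset (ZMod n)} {φ : ℕ × ℕ → ℕ × ℕ}
    (hφ : (range (n - k + 1) ×ˢ range (k + 1)).image φ = range (k + 1) ×ˢ range (n - k + 1))
    (hF : ∀ i j, i ≤ n - k → j ≤ k → F (Ich k n i j) = Dch k n (φ (i, j)).1 (φ (i, j)).2) :
    (Cch k n).image F = CDch k n := by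
  rw [Cch, CDch, ← hφ, image_image, image_image]
  refine image_congr fun ⟨i, j⟩ hij => ?_
  rw [mem_coe, mem_product, mem_range, mem_range] at hij
  exact hF i j (Nat.le_of_lt_succ hij.1) (Nat.le_of_lt_succ hij.2)

lemma image_add_Cch_of_even (hkn : k ≤ n) (hk : Even k) :
    (Cch k n).image (fun I => I.image (fun x => x + ((k / 2 : ℕ) : ZMod n))) = CDch k n :=
  image_Cch_eq_CDch (image_sub_snd_fst_range_product (n - k) k)
    fun _ _ hi hj => image_add_Ich_of_even hkn hk hi hj

lemma image_sub_Cch_of_even (hkn : k ≤ n) (hnk : Even (n - k)) :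
    (Cch k n).image (fun I => I.image (fun x => x - (((n - k) / 2 : ℕ) : ZMod n))) = CDch k n :=
  image_Cch_eq_CDch (image_snd_sub_fst_range_product (n - k) k)
    fun _ _ hi hj => image_sub_Ich_of_even hkn hnk hi hj

end Collections

/-- if `k` is even then `σ^{k/2}` takes the checkboard collection to the
dual checkboard collection (labelwise `σ^{k/2}(I^ch_{i,j}) = Î^ch_{k−j,i}`), and if
`n−k` is even then `σ^{−(n−k)/2}` does (labelwise `σ^{−(n−k)/2}(I^ch_{i,j}) = Î^ch_{j,n−k−i}`). -/
theorem rotate_checkboard_eq_dual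
    (n k : ℕ) (hn : 4 ≤ n) (hk : 2 ≤ k) (hkn : k ≤ n - 2) :
    (k % 2 = 0 →
      (∀ i j : ℕ, i ≤ n - k → j ≤ k →
        (Ich k n i j).image (fun x => x + ((k / 2 : ℕ) : ZMod n)) = Dch k n (k - j) i) ∧
      (Cch k n).image (fun I => I.image (fun x => x + ((k / 2 : ℕ) : ZMod n))) = CDch k n) ∧
    ((n - k) % 2 = 0 →
      (∀ i j : ℕ, i ≤ n - k → j ≤ k →
        (Ich k n i j).image (fun x => x - (((n - k) / 2 : ℕ) : ZMod n)) = Dch k n j (n - k - i)) ∧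
      (Cch k n).image (fun I => I.image (fun x => x - (((n - k) / 2 : ℕ) : ZMod n))) = CDch k n) := by
  have hkn' : k ≤ n := hkn.trans (n.sub_le 2)
  refine ⟨fun hmod => ?_, fun hmod => ?_⟩
  · have hk_even : Even k := Nat.even_iff.mpr hmod
    exact ⟨fun _ _ => image_add_Ich_of_even hkn' hk_even, image_add_Cch_of_even hkn' hk_even⟩
  · have hnk_even : Even (n - k) := Nat.even_iff.mpr hmod
    exact ⟨fun _ _ => image_sub_Ich_of_even hkn' hnk_even, image_sub_Cch_of_even hkn' hnk_even⟩
end
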